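/- ∫₀¹ [₂F₁(1/3,2/3;1|x)]²·(1−x)^{−1/2} dx = (9/2)·₇F₆(1/3,1/3,1/2,1/2,2/3,2/3,5/4; 1/4,5/6,5/6,1,7/6,7/6 | 1). -/

import Mathlib

open Real MeasureTheory Set

/-- Modified Bessel function `I₀(t) = (1/π)∫₀^π exp(t cos θ) dθ`. -/
noncomputable def I0 (t : ℝ) : ℝ := (1 / π) * ∫ θ in (0:ℝ)..π, exp (t * cos θ)

/-- Modified Bessel function `K₀(t) = ∫₀^∞ exp(−t cosh u) du`. -/
noncomputable def K0 (t : ℝ) : ℝ := ∫ u in Ioi (0:ℝ), exp (-(t * Real.cosh u))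

/-- Rising factorial `(a)ₙ = a(a+1)⋯(a+n−1)`. -/
noncomputable def ris (a : ℝ) (n : ℕ) : ℝ := ∏ k ∈ Finset.range n, (a + k)

/-- Generalized hypergeometric series `ₚF_q(a; b | x)`. -/
noncomputable def pFq (a b : List ℝ) (x : ℝ) : ℝ :=
  ∑' n : ℕ, ((a.map fun p => ris p n).prod / (b.map fun q => ris q n).prod) * x ^ n
    / (n.factorial : ℝ)

/-!
Expand both factors of the integrand in Jacobi polynomials `Pₙ`, orthogonal for the beta
distribution `Beta(c, s)`; the theorem is the case `c = 1`, `s = 1/2` of the resulting Parseval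
identity. The moments `∫ xᵐ Pₙ` are explicit, so Parseval's identity for two monomials is a
terminating summation, whose two sides satisfy the same first-order recurrence in `m` by creative
telescoping. It extends to power series with nonnegative coefficients by monotone convergence. The
coefficient `∫ ₂F₁(a, b; c | x) Pₙ` is a multiple of `₂F₁(a + n, b + n; c + s + 2n | 1)`, which
Gauss's theorem evaluates, and the sum over `n` of the products of two such coefficients is a
very-well-poised `₇F₆` at `1`.
-/

open ProbabilityTheory Filter Asymptotics
open scoped Nat ENNReal

section RisingFactorial

lemma ris_zero (a : ℝ) : ris a 0 = 1 := by
  simp [ris]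

lemma ris_succ (a : ℝ) (n : ℕ) : ris a (n + 1) = ris a n * (a + n) := by
  simp [ris, Finset.prod_range_succ]

lemma ris_pos {a : ℝ} (ha : 0 < a) (n : ℕ) : 0 < ris a n :=
  Finset.prod_pos fun _ _ => by positivity

lemma ris_add (a : ℝ) (m n : ℕ) : ris a (m + n) = ris a m * ris (a + m) n := by
  simp [ris, Finset.prod_range_add, add_assoc]

lemma ris_one (n : ℕ) : ris 1 n = n ! := by
  simp [ris, ← Finset.prod_range_add_one_eq_factorial, add_comm]

lemma mul_ris_add_one (a : ℝ) (n : ℕ) : a * ris (a + 1) n = ris a n * (a + n) := by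
  rw [← ris_succ, add_comm n 1, ris_add]
  simp [ris]

lemma ris_eq_eval_ascPochhammer (a : ℝ) (n : ℕ) : ris a n = (ascPochhammer ℝ n).eval a := by
  induction n with
  | zero => simp [ris_zero]
  | succ n ih => rw [ris_succ, ih, ascPochhammer_succ_eval]

lemma choose_add_sub_one_eq_ris_div_factorial (a : ℝ) (n : ℕ) :
    Ring.choose (a + n - 1) n = ris a n / n ! := by
  have hmul : n ! • Ring.choose (a + n - 1) n = ris a n := by
    rw [Ring.choose, Ring.factorial_nsmul_multichoose_eq_ascPochhammer,
      show a + n - 1 - n + 1 = a by ring, Polynomial.ascPochhammer_smeval_eq_eval,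
      ris_eq_eval_ascPochhammer]
  rw [← hmul, nsmul_eq_mul]
  field_simp

lemma Gamma_add_natCast_eq_ris_mul {a : ℝ} (ha : 0 < a) (n : ℕ) :
    Gamma (a + n) = ris a n * Gamma a := by
  induction n with
  | zero => simp [ris_zero]
  | succ n ih =>
    rw [ris_succ, Nat.cast_succ, ← add_assoc, Gamma_add_one (by positivity), ih]
    ring

lemma ris_succ_isTheta {a : ℝ} (ha : 0 < a) :
    (fun n : ℕ => ris a (n + 1)) =Θ[atTop] fun n : ℕ => (n : ℝ) ^ a * n ! :=
  isTheta_of_div_tendsto_nhds_ne_zero (GammaSeq_tendsto_Gamma a) (Gamma_pos_of_pos ha).ne'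

end RisingFactorial

section HypergeometricCoefficients

/-- The coefficient of `xⁿ` in the hypergeometric series `pFq a b x`. -/
noncomputable def pFqCoeff (a b : List ℝ) (n : ℕ) : ℝ :=
  (a.map fun p => ris p n).prod / (b.map fun q => ris q n).prod / n !

lemma pFq_eq_tsum (a b : List ℝ) (x : ℝ) : pFq a b x = ∑' n, pFqCoeff a b n * x ^ n :=
  tsum_congr fun _ => by rw [pFqCoeff]; ring

lemma pFqCoeff_pos {a b : List ℝ} (ha : ∀ p ∈ a, 0 < p) (hb : ∀ q ∈ b, 0 < q) (n : ℕ) :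
    0 < pFqCoeff a b n := by
  have prod_ris_pos {l : List ℝ} (hl : ∀ p ∈ l, 0 < p) : 0 < (l.map fun p => ris p n).prod :=
    List.prod_pos (by simpa using fun p hp => ris_pos (hl p hp) n)
  have := prod_ris_pos ha
  have := prod_ris_pos hb
  unfold pFqCoeff
  positivity

-- Divergence on either side is harmless: both sides are then `0`.
lemma pFq_eq_toReal_tsum {a b : List ℝ} (ha : ∀ p ∈ a, 0 < p) (hb : ∀ q ∈ b, 0 < q) {x : ℝ}
    (hx : 0 ≤ x) :
    pFq a b x
      = (∑' n, ENNReal.ofReal (pFqCoeff a b n) * ENNReal.ofReal x ^ n).toReal := by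
  rw [ENNReal.tsum_toReal_eq fun n => by finiteness, pFq_eq_tsum]
  simp [ENNReal.toReal_ofReal (pFqCoeff_pos ha hb _).le, ENNReal.toReal_ofReal hx]

lemma prod_ris_succ_isTheta {l : List ℝ} (hl : ∀ p ∈ l, 0 < p) :
    (fun n : ℕ => (l.map fun p => ris p (n + 1)).prod)
      =Θ[atTop] fun n : ℕ => (n : ℝ) ^ l.sum * (n ! : ℝ) ^ l.length := by
  refine (IsTheta.listProd fun p hp => ris_succ_isTheta (hl p hp)).trans_eventuallyEq ?_
  filter_upwards [eventually_gt_atTop 0] with n hn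
  have hn' : (0 : ℝ) < n := by exact_mod_cast hn
  rw [List.prod_map_mul, List.map_const', List.prod_replicate]
  congr 1
  clear hl
  induction l with
  | nil => simp
  | cons p l ih => rw [List.map_cons, List.prod_cons, List.sum_cons, rpow_add hn', ih]

lemma pFqCoeff_succ_isTheta {a b : List ℝ} (ha : ∀ p ∈ a, 0 < p) (hb : ∀ q ∈ b, 0 < q)
    (hlen : a.length = b.length + 1) :
    (fun n : ℕ => pFqCoeff a b (n + 1))
      =Θ[atTop] fun n : ℕ => (n : ℝ) ^ (a.sum - b.sum - 1) := by
  have hfactorial := prod_ris_succ_isTheta (l := [1]) (by simp)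
  simp only [List.map_cons, List.map_nil, List.prod_singleton, ris_one] at hfactorial
  refine (((prod_ris_succ_isTheta ha).div (prod_ris_succ_isTheta hb)).div
    hfactorial).trans_eventuallyEq ?_
  filter_upwards [eventually_gt_atTop 0] with n hn
  have hn' : (0 : ℝ) < n := by exact_mod_cast hn
  have := rpow_pos_of_pos hn' b.sum
  rw [hlen, rpow_sub hn', rpow_sub hn', List.sum_singleton, List.length_singleton]
  field_simp
  ring

lemma summable_pFqCoeff {a b : List ℝ} (ha : ∀ p ∈ a, 0 < p) (hb : ∀ q ∈ b, 0 < q)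
    (hlen : a.length = b.length + 1) (hsum : a.sum < b.sum) : Summable (pFqCoeff a b) :=
  (summable_nat_add_iff 1).1 <|
    summable_of_isBigO_nat (summable_nat_rpow.2 (by linarith))
      (pFqCoeff_succ_isTheta ha hb hlen).isBigO

lemma hasSum_pFqCoeff {a b : List ℝ} (ha : ∀ p ∈ a, 0 < p) (hb : ∀ q ∈ b, 0 < q)
    (hlen : a.length = b.length + 1) (hsum : a.sum < b.sum) :
    HasSum (pFqCoeff a b) (pFq a b 1) := by
  simpa [pFq_eq_tsum] using (summable_pFqCoeff ha hb hlen hsum).hasSum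

lemma hasSum_pFqCoeff_one_zero (a : ℝ) {x : ℝ} (hx : |x| < 1) :
    HasSum (fun n => pFqCoeff [a] [] n * x ^ n) ((1 - x) ^ (-a)) := by
  have hmem : x ∈ Metric.eball (0 : ℝ) 1 := by
    simpa [Metric.mem_eball, edist_dist, Real.dist_eq] using hx
  have hsum := (one_div_one_sub_rpow_hasFPowerSeriesOnBall_zero a).hasSum hmem
  rw [rpow_neg (by linarith [(abs_lt.1 hx).2]), ← one_div]
  simpa [pFqCoeff, FormalMultilinearSeries.ofScalars_apply_eq,
    choose_add_sub_one_eq_ris_div_factorial, mul_comm] using hsum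

end HypergeometricCoefficients

section BetaDistribution

lemma measurable_betaPDF (α β : ℝ) : Measurable (betaPDF α β) :=
  (measurable_betaPDFReal α β).ennreal_ofReal

lemma ae_betaMeasure_mem_Ioo (α β : ℝ) : ∀ᵐ x ∂betaMeasure α β, x ∈ Ioo (0 : ℝ) 1 := by
  refine (ae_withDensity_iff (measurable_betaPDF α β)).2 (Eventually.of_forall fun x hx => ?_)
  by_contra hmem
  exact hx (by rw [betaPDF_eq, if_neg (by exact hmem), ENNReal.ofReal_zero])

lemma lintegral_rpow_mul_one_sub_rpow_betaMeasure {α β u v : ℝ} (hα : 0 < α) (hβ : 0 < β)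
    (hαu : 0 < α + u) (hβv : 0 < β + v) :
    ∫⁻ x, ENNReal.ofReal (x ^ u * (1 - x) ^ v) ∂betaMeasure α β
      = ENNReal.ofReal (beta (α + u) (β + v) / beta α β) := by
  have hpos := beta_pos hα hβ
  have hpos' := beta_pos hαu hβv
  have hreweight (x : ℝ) : betaPDF α β x * ENNReal.ofReal (x ^ u * (1 - x) ^ v)
      = ENNReal.ofReal (beta (α + u) (β + v) / beta α β) * betaPDF (α + u) (β + v) x := by
    by_cases hx : 0 < x ∧ x < 1
    · have h0 := hx.1
      have h1 : 0 < 1 - x := sub_pos.2 hx.2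
      rw [betaPDF_of_pos_lt_one hx.1 hx.2, betaPDF_of_pos_lt_one hx.1 hx.2,
        ← ENNReal.ofReal_mul (by positivity), ← ENNReal.ofReal_mul (by positivity),
        add_sub_right_comm, add_sub_right_comm, rpow_add h0, rpow_add h1]
      congr 1
      field_simp
    · simp [betaPDF_eq, hx]
  rw [betaMeasure, lintegral_withDensity_eq_lintegral_mul _ (measurable_betaPDF α β) (by fun_prop)]
  simp only [Pi.mul_apply, hreweight]
  rw [lintegral_const_mul _ (measurable_betaPDF _ _), lintegral_betaPDF_eq_one hαu hβv, mul_one]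

lemma lintegral_pow_betaMeasure {α β : ℝ} (hα : 0 < α) (hβ : 0 < β) (n : ℕ) :
    ∫⁻ x, ENNReal.ofReal x ^ n ∂betaMeasure α β
      = ENNReal.ofReal (ris α n / ris (α + β) n) := by
  calc ∫⁻ x, ENNReal.ofReal x ^ n ∂betaMeasure α β
      = ∫⁻ x, ENNReal.ofReal (x ^ (n : ℝ) * (1 - x) ^ (0 : ℝ)) ∂betaMeasure α β := by
        refine lintegral_congr_ae ?_
        filter_upwards [ae_betaMeasure_mem_Ioo α β] with x hx
        rw [rpow_natCast, rpow_zero, mul_one, ENNReal.ofReal_pow hx.1.le]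
    _ = ENNReal.ofReal (beta (α + n) (β + 0) / beta α β) :=
        lintegral_rpow_mul_one_sub_rpow_betaMeasure hα hβ (by positivity) (by simpa)
    _ = ENNReal.ofReal (ris α n / ris (α + β) n) := by
        have := Gamma_pos_of_pos hα
        have := Gamma_pos_of_pos hβ
        have := Gamma_pos_of_pos (add_pos hα hβ)
        have := ris_pos (add_pos hα hβ) n
        rw [beta, beta, add_zero, add_right_comm, Gamma_add_natCast_eq_ris_mul hα,
          Gamma_add_natCast_eq_ris_mul (add_pos hα hβ)]
        congr 1
        field_simp

lemma integral_betaMeasure {α β : ℝ} (hα : 0 < α) (hβ : 0 < β) (f : ℝ → ℝ) :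
    ∫ x, f x ∂betaMeasure α β
      = (∫ x in (0 : ℝ)..1, x ^ (α - 1) * (1 - x) ^ (β - 1) * f x) / beta α β := by
  rw [betaMeasure, integral_withDensity_eq_integral_toReal_smul (measurable_betaPDF α β)
      (Eventually.of_forall fun x => ENNReal.ofReal_lt_top),
    intervalIntegral.integral_of_le zero_le_one, integral_Ioc_eq_integral_Ioo,
    ← integral_indicator measurableSet_Ioo, ← integral_div]
  congr 1 with x
  by_cases hx : 0 < x ∧ x < 1
  · rw [indicator_of_mem (show x ∈ Ioo 0 1 from hx), betaPDF,
      ENNReal.toReal_ofReal (betaPDFReal_pos hx.1 hx.2 hα hβ).le, betaPDFReal, if_pos hx,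
      smul_eq_mul]
    ring
  · rw [indicator_of_notMem (show x ∉ Ioo 0 1 from hx), betaPDF_eq, if_neg hx]
    simp

end BetaDistribution

section GaussSummation

variable {a b c : ℝ}

-- Euler's integral: expand `(1 - X)⁻ᵃ` for `X` distributed as `Beta(b, c - b)`.
lemma tsum_ofReal_pFqCoeff_two_one (ha : 0 < a) (hb : 0 < b) (hc : a + b < c) :
    ∑' n, ENNReal.ofReal (pFqCoeff [a, b] [c] n)
      = ENNReal.ofReal (beta b (c - b - a) / beta b (c - b)) := by
  have hcb : 0 < c - b := by linarith
  have hcoeff (n : ℕ) : ENNReal.ofReal (pFqCoeff [a, b] [c] n)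
      = ∫⁻ x, ENNReal.ofReal (pFqCoeff [a] [] n) * ENNReal.ofReal x ^ n ∂betaMeasure b (c - b) := by
    rw [lintegral_const_mul _ (by fun_prop), lintegral_pow_betaMeasure hb hcb,
      ← ENNReal.ofReal_mul (pFqCoeff_pos (by simpa) (by simp) n).le, add_sub_cancel]
    congr 1
    simp only [pFqCoeff, List.map_cons, List.map_nil, List.prod_cons, List.prod_nil]
    ring
  calc ∑' n, ENNReal.ofReal (pFqCoeff [a, b] [c] n)
      = ∫⁻ x, ∑' n, ENNReal.ofReal (pFqCoeff [a] [] n) * ENNReal.ofReal x ^ n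
          ∂betaMeasure b (c - b) := by
        simp_rw [hcoeff]
        exact (lintegral_tsum fun n => by fun_prop).symm
    _ = ∫⁻ x, ENNReal.ofReal (x ^ (0 : ℝ) * (1 - x) ^ (-a)) ∂betaMeasure b (c - b) := by
        refine lintegral_congr_ae ?_
        filter_upwards [ae_betaMeasure_mem_Ioo b (c - b)] with x ⟨hx0, hx1⟩
        have hcoeff_nonneg (n : ℕ) := (pFqCoeff_pos (a := [a]) (b := []) (by simpa) (by simp) n).le
        have hsum := hasSum_pFqCoeff_one_zero a (abs_lt.2 ⟨by linarith, hx1⟩)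
        rw [rpow_zero, one_mul, ← hsum.tsum_eq, ENNReal.ofReal_tsum_of_nonneg
          (fun n => mul_nonneg (hcoeff_nonneg n) (by positivity)) hsum.summable]
        simp only [ENNReal.ofReal_mul (hcoeff_nonneg _), ENNReal.ofReal_pow hx0.le]
    _ = ENNReal.ofReal (beta b (c - b - a) / beta b (c - b)) := by
        rw [lintegral_rpow_mul_one_sub_rpow_betaMeasure hb hcb (by simpa) (by linarith), add_zero,
          ← sub_eq_add_neg]

theorem pFq_two_one_one (ha : 0 < a) (hb : 0 < b) (hc : a + b < c) :
    pFq [a, b] [c] 1 = Gamma c * Gamma (c - a - b) / (Gamma (c - a) * Gamma (c - b)) := by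
  have hc0 : 0 < c := by linarith
  have hbeta := beta_pos hb (show 0 < c - b - a by linarith)
  have hbeta' := beta_pos hb (show 0 < c - b by linarith)
  calc pFq [a, b] [c] 1
      = (∑' n, ENNReal.ofReal (pFqCoeff [a, b] [c] n)).toReal := by
        simpa using pFq_eq_toReal_tsum (by simp [ha, hb]) (by simpa) zero_le_one
    _ = beta b (c - b - a) / beta b (c - b) := by
        rw [tsum_ofReal_pFqCoeff_two_one ha hb hc, ENNReal.toReal_ofReal (by positivity)]
    _ = Gamma c * Gamma (c - a - b) / (Gamma (c - a) * Gamma (c - b)) := by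
        have := Gamma_pos_of_pos hb
        have := Gamma_pos_of_pos hc0
        rw [beta, beta, add_sub_cancel, show b + (c - b - a) = c - a by ring, sub_right_comm]
        field_simp

end GaussSummation

section JacobiExpansion

lemma cast_descFactorial_succ (m n : ℕ) :
    (m.descFactorial (n + 1) : ℝ) = (m - n) * m.descFactorial n := by
  rw [Nat.descFactorial_succ]
  rcases le_or_gt n m with hle | hlt
  · push_cast [Nat.cast_sub hle]
    rfl
  · simp [Nat.descFactorial_eq_zero_iff_lt.2 hlt]

/-- The `m`-th moment `∫ xᵐ Pₙ(x) dμ(x)` of the `n`-th Jacobi polynomial for the beta distribution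
`μ = Beta(c, s)`. By Rodrigues' formula and `n` integrations by parts it equals this expression when
`Pₙ` is normalized by `(s)ₙ x^(c-1) (1-x)^(s-1) Pₙ(x) = (-1)ⁿ dⁿ/dxⁿ [x^(n+c-1) (1-x)^(n+s-1)]`. -/
noncomputable def jacobiMoment (c s : ℝ) (n m : ℕ) : ℝ :=
  m.descFactorial n * ris c m / ris (c + s) (m + n)

/-- The reciprocal of `∫ Pₙ² dμ`, for the Jacobi polynomials `Pₙ` of `jacobiMoment`. -/
noncomputable def jacobiWeight (c s : ℝ) (n : ℕ) : ℝ :=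
  pFqCoeff [c + s - 1, (c + s + 1) / 2, s] [(c + s - 1) / 2, c] n

variable {c s : ℝ}

lemma jacobiMoment_eq_zero {n m : ℕ} (h : m < n) : jacobiMoment c s n m = 0 := by
  simp [jacobiMoment, Nat.descFactorial_eq_zero_iff_lt.2 h]

lemma jacobiMoment_nonneg (hc : 0 < c) (hs : 0 < s) (n m : ℕ) : 0 ≤ jacobiMoment c s n m := by
  have := ris_pos hc m
  have := ris_pos (add_pos hc hs) (m + n)
  unfold jacobiMoment
  positivity

lemma jacobiWeight_pos (hc : 0 < c) (hs : 0 < s) (hcs : 1 < c + s) (n : ℕ) :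
    0 < jacobiWeight c s n :=
  have hnum : 0 < c + s - 1 := by linarith
  pFqCoeff_pos (by simp [hs, hnum, show 0 < c + s + 1 by linarith]) (by simp [hc, hnum]) n

lemma jacobiWeight_succ (hcs : 1 < c + s) (n : ℕ) :
    jacobiWeight c s (n + 1)
      = (c + s + 1 + 2 * n) * ris (c + s) n * ris s (n + 1) / (ris c (n + 1) * (n + 1)!) := by
  have hbase : 0 < (c + s - 1) / 2 := by linarith
  have hshift : ris (c + s - 1) (n + 1) = (c + s - 1) * ris (c + s) n := by
    rw [ris_succ, ← mul_ris_add_one, sub_add_cancel]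
  have hpoised := mul_ris_add_one ((c + s - 1) / 2) (n + 1)
  rw [show (c + s - 1) / 2 + 1 = (c + s + 1) / 2 by ring] at hpoised
  have hpos := ris_pos hbase (n + 1)
  simp only [jacobiWeight, pFqCoeff, List.map_cons, List.map_nil, List.prod_cons, List.prod_nil,
    mul_one, hshift]
  rw [eq_div_of_mul_eq hbase.ne' ((mul_comm _ _).trans hpoised)]
  push_cast
  have : c + s - 1 ≠ 0 := by linarith
  field_simp
  ring

-- The right-hand side is the certificate produced by Zeilberger's algorithm.
lemma sum_jacobiWeight_mul_jacobiMoment_telescope (hc : 0 < c) (hcs : 1 < c + s) (m k N : ℕ) :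
    ∑ n ∈ Finset.range (N + 1), jacobiWeight c s n * jacobiMoment c s n k
        * (jacobiMoment c s n (m + 1)
          - (c + (m + k : ℕ)) / (c + s + (m + k : ℕ)) * jacobiMoment c s n m)
      = -(ris s (N + 1) * ris (c + s) N * m.descFactorial N * k.descFactorial (N + 1)
          * ris c m * ris c k) / (N ! * ris c N * ris (c + s) (m + N + 1) * ris (c + s) (k + N)
          * (c + s + (m + k : ℕ))) := by
  have hσ : 0 < c + s := by linarith
  induction N with
  | zero =>
    have := ris_pos hσ m
    have := ris_pos hσ k
    simp only [jacobiWeight, jacobiMoment, pFqCoeff, List.map_cons, List.map_nil, List.prod_cons,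
      List.prod_nil, zero_add, add_zero, Finset.range_one, Finset.sum_singleton, ris_zero, ris_succ,
      Nat.factorial_zero, Nat.descFactorial_zero, Nat.descFactorial_one, Nat.cast_add,
      Nat.cast_zero, Nat.cast_one]
    field_simp
    ring
  | succ N ih =>
    have := ris_pos hσ (m + N)
    have := ris_pos hσ (k + N)
    have := ris_pos hc N
    rw [Finset.sum_range_succ, ih, jacobiWeight_succ hcs]
    simp only [jacobiMoment, ← add_assoc, add_right_comm m 1 N, ris_succ, Nat.factorial_succ,
      Nat.succ_descFactorial_succ, cast_descFactorial_succ m N, cast_descFactorial_succ k (N + 1)]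
    push_cast
    field_simp
    ring

lemma sum_jacobiWeight_mul_jacobiMoment_mul_jacobiMoment (hc : 0 < c) (hcs : 1 < c + s)
    {m N : ℕ} (hmN : m < N) (k : ℕ) :
    ∑ n ∈ Finset.range N, jacobiWeight c s n * jacobiMoment c s n m * jacobiMoment c s n k
      = ris c (m + k) / ris (c + s) (m + k) := by
  obtain ⟨N, rfl⟩ := Nat.exists_eq_add_one_of_ne_zero (Nat.ne_zero_of_lt hmN)
  induction m with
  | zero =>
    rw [Finset.sum_range_succ', Finset.sum_eq_zero fun n _ => by
      simp [jacobiMoment_eq_zero n.succ_pos]]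
    simp [jacobiWeight, pFqCoeff, jacobiMoment, ris_zero]
  | succ m ih =>
    have htelescope := sum_jacobiWeight_mul_jacobiMoment_telescope hc hcs m k N
    have hvanish : m.descFactorial N = 0 := Nat.descFactorial_eq_zero_iff_lt.2 (by lia)
    simp only [hvanish, mul_sub, Finset.sum_sub_distrib, Nat.cast_zero, mul_zero, zero_mul,
      neg_zero, zero_div, sub_eq_zero] at htelescope
    calc ∑ n ∈ Finset.range (N + 1),
          jacobiWeight c s n * jacobiMoment c s n (m + 1) * jacobiMoment c s n k
        = (c + (m + k : ℕ)) / (c + s + (m + k : ℕ)) * ∑ n ∈ Finset.range (N + 1),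
            jacobiWeight c s n * jacobiMoment c s n m * jacobiMoment c s n k := by
          simp only [mul_right_comm _ (jacobiMoment c s _ (m + 1)), htelescope, Finset.mul_sum]
          exact Finset.sum_congr rfl fun n _ => by ring
      _ = ris c (m + 1 + k) / ris (c + s) (m + 1 + k) := by
          rw [ih (by lia), add_right_comm m 1 k, ris_succ, ris_succ, mul_comm (ris c _),
            mul_comm (ris (c + s) _), mul_div_mul_comm]

lemma tsum_jacobiWeight_mul_jacobiMoment_mul_jacobiMoment (hc : 0 < c) (hs : 0 < s)
    (hcs : 1 < c + s) (m k : ℕ) :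
    ∑' n, ENNReal.ofReal (jacobiWeight c s n)
        * (ENNReal.ofReal (jacobiMoment c s n m) * ENNReal.ofReal (jacobiMoment c s n k))
      = ENNReal.ofReal (ris c (m + k) / ris (c + s) (m + k)) := by
  have hmoment := jacobiMoment_nonneg hc hs
  have hweight (n : ℕ) := (jacobiWeight_pos hc hs hcs n).le
  rw [tsum_eq_sum (s := Finset.range (m + 1)) fun n hn => by
      simp [jacobiMoment_eq_zero (show m < n by simpa using hn)],
    ← sum_jacobiWeight_mul_jacobiMoment_mul_jacobiMoment hc hcs m.lt_succ_self,
    ENNReal.ofReal_sum_of_nonneg fun n _ =>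
      mul_nonneg (mul_nonneg (hweight n) (hmoment n m)) (hmoment n k)]
  refine Finset.sum_congr rfl fun n _ => ?_
  rw [mul_assoc, ENNReal.ofReal_mul (hweight n), ENNReal.ofReal_mul (hmoment n m)]

-- Parseval's identity for the orthogonal system of Jacobi polynomials.
theorem lintegral_tsum_mul_tsum_betaMeasure (hc : 0 < c) (hs : 0 < s) (hcs : 1 < c + s)
    (p q : ℕ → ℝ≥0∞) :
    ∫⁻ x, (∑' m, p m * ENNReal.ofReal x ^ m) * ∑' k, q k * ENNReal.ofReal x ^ k ∂betaMeasure c s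
      = ∑' n, ENNReal.ofReal (jacobiWeight c s n)
          * ((∑' m, p m * ENNReal.ofReal (jacobiMoment c s n m))
            * ∑' k, q k * ENNReal.ofReal (jacobiMoment c s n k)) := by
  have hmonomials (m k : ℕ) :
      ∫⁻ x, (p m * ENNReal.ofReal x ^ m) * (q k * ENNReal.ofReal x ^ k) ∂betaMeasure c s
        = ∑' n, ENNReal.ofReal (jacobiWeight c s n)
            * ((p m * ENNReal.ofReal (jacobiMoment c s n m))
              * (q k * ENNReal.ofReal (jacobiMoment c s n k))) := by
    simp only [mul_mul_mul_comm (p m), ← pow_add, mul_left_comm _ (p m * q k)]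
    rw [lintegral_const_mul _ (by fun_prop), lintegral_pow_betaMeasure hc hs,
      ← tsum_jacobiWeight_mul_jacobiMoment_mul_jacobiMoment hc hs hcs, ENNReal.tsum_mul_left]
  calc ∫⁻ x, (∑' m, p m * ENNReal.ofReal x ^ m) * ∑' k, q k * ENNReal.ofReal x ^ k ∂betaMeasure c s
      = ∑' m, ∑' k,
          ∫⁻ x, (p m * ENNReal.ofReal x ^ m) * (q k * ENNReal.ofReal x ^ k) ∂betaMeasure c s := by
        simp_rw [← ENNReal.tsum_mul_right, ← ENNReal.tsum_mul_left]
        rw [lintegral_tsum fun m => (Measurable.tsum fun k => by fun_prop).aemeasurable]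
        exact tsum_congr fun m => lintegral_tsum fun k => by fun_prop
    _ = ∑' n, ∑' m, ∑' k, ENNReal.ofReal (jacobiWeight c s n)
          * ((p m * ENNReal.ofReal (jacobiMoment c s n m))
            * (q k * ENNReal.ofReal (jacobiMoment c s n k))) := by
        simp_rw [hmonomials]
        exact (tsum_congr fun m => ENNReal.tsum_comm).trans ENNReal.tsum_comm
    _ = _ := by simp only [ENNReal.tsum_mul_left, ENNReal.tsum_mul_right]

end JacobiExpansion

section HypergeometricParseval

variable {a b a' b' c s : ℝ}

lemma pFqCoeff_two_one_mul_jacobiMoment (hc : 0 < c) (hs : 0 < s) (n j : ℕ) :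
    pFqCoeff [a, b] [c] (j + n) * jacobiMoment c s n (j + n)
      = ris a n * ris b n / ris (c + s) (2 * n)
        * pFqCoeff [a + n, b + n] [c + s + (2 * n : ℕ)] j := by
  have hσ := add_pos hc hs
  have hdesc : (j ! : ℝ) * (j + n).descFactorial n = (j + n)! := by
    have hnat := Nat.factorial_mul_descFactorial (Nat.le_add_left n j)
    rw [Nat.add_sub_cancel] at hnat
    exact_mod_cast hnat
  have := ris_pos hc (n + j)
  have := ris_pos hσ (2 * n)
  have := ris_pos (show 0 < c + s + (2 * n : ℕ) by positivity) j
  simp only [jacobiMoment, pFqCoeff, List.map_cons, List.map_nil, List.prod_cons, List.prod_nil,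
    mul_one]
  rw [← hdesc, show j + n + n = 2 * n + j by ring, add_comm j n, ris_add a, ris_add b,
    ris_add (c + s)]
  field_simp

lemma pFq_two_one_one_shift (ha : 0 < a) (hb : 0 < b) (hab : a + b < c) (n : ℕ) :
    pFq [a + n, b + n] [c + (2 * n : ℕ)] 1
      = pFq [a, b] [c] 1 * (ris c (2 * n) / (ris (c - a) n * ris (c - b) n)) := by
  have hc : 0 < c := by linarith
  have hca : 0 < c - a := by linarith
  have hcb : 0 < c - b := by linarith
  have := Gamma_pos_of_pos hca
  have := Gamma_pos_of_pos hcb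
  have := ris_pos hca n
  have := ris_pos hcb n
  rw [pFq_two_one_one ha hb hab,
    pFq_two_one_one (by positivity) (by positivity) (by push_cast; linarith),
    show c + (2 * n : ℕ) - (a + n) - (b + n) = c - a - b by push_cast; ring,
    show c + (2 * n : ℕ) - (a + n) = c - a + n by push_cast; ring,
    show c + (2 * n : ℕ) - (b + n) = c - b + n by push_cast; ring,
    Gamma_add_natCast_eq_ris_mul hc, Gamma_add_natCast_eq_ris_mul hca,
    Gamma_add_natCast_eq_ris_mul hcb]
  field_simp

/-- The integral `∫ ₂F₁(a, b; c | x) Pₙ(x) dμ(x)` in closed form, for `μ = Beta(c, s)` and the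
Jacobi polynomials `Pₙ` of `jacobiMoment`. -/
noncomputable def jacobiCoeff (a b c s : ℝ) (n : ℕ) : ℝ :=
  pFq [a, b] [c + s] 1 * (ris a n * ris b n / (ris (c + s - a) n * ris (c + s - b) n))

lemma hasSum_pFqCoeff_two_one_mul_jacobiMoment (ha : 0 < a) (hb : 0 < b) (hc : 0 < c) (hs : 0 < s)
    (hab : a + b < c + s) (n : ℕ) :
    HasSum (fun m => pFqCoeff [a, b] [c] m * jacobiMoment c s n m) (jacobiCoeff a b c s n) := by
  have hinitial : ∑ m ∈ Finset.range n, pFqCoeff [a, b] [c] m * jacobiMoment c s n m = 0 :=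
    Finset.sum_eq_zero fun m hm => by simp [jacobiMoment_eq_zero (Finset.mem_range.1 hm)]
  have hvalue : jacobiCoeff a b c s n = ris a n * ris b n / ris (c + s) (2 * n)
      * pFq [a + n, b + n] [c + s + (2 * n : ℕ)] 1 := by
    have := ris_pos (add_pos hc hs) (2 * n)
    rw [jacobiCoeff, pFq_two_one_one_shift ha hb hab]
    field_simp
  rw [← hasSum_nat_add_iff' n, hinitial, sub_zero, hvalue]
  simp only [pFqCoeff_two_one_mul_jacobiMoment hc hs]
  refine (hasSum_pFqCoeff ?_ ?_ rfl ?_).mul_left _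
  · simp only [List.mem_cons, List.not_mem_nil, or_false, forall_eq_or_imp, forall_eq]
    constructor <;> positivity
  · simpa using by positivity
  · simp only [List.sum_cons, List.sum_nil]
    push_cast
    linarith

lemma jacobiCoeff_nonneg (ha : 0 < a) (hb : 0 < b) (hc : 0 < c) (hs : 0 < s)
    (hab : a + b < c + s) (n : ℕ) : 0 ≤ jacobiCoeff a b c s n :=
  (hasSum_pFqCoeff_two_one_mul_jacobiMoment ha hb hc hs hab n).nonneg fun m =>
    mul_nonneg (pFqCoeff_pos (by simp [ha, hb]) (by simpa) m).le (jacobiMoment_nonneg hc hs n m)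

lemma tsum_ofReal_pFqCoeff_two_one_mul_jacobiMoment (ha : 0 < a) (hb : 0 < b) (hc : 0 < c)
    (hs : 0 < s) (hab : a + b < c + s) (n : ℕ) :
    ∑' m, ENNReal.ofReal (pFqCoeff [a, b] [c] m) * ENNReal.ofReal (jacobiMoment c s n m)
      = ENNReal.ofReal (jacobiCoeff a b c s n) := by
  have hcoeff (m : ℕ) : 0 ≤ pFqCoeff [a, b] [c] m :=
    (pFqCoeff_pos (by simp [ha, hb]) (by simpa) m).le
  have hsum := hasSum_pFqCoeff_two_one_mul_jacobiMoment ha hb hc hs hab n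
  rw [← hsum.tsum_eq, ENNReal.ofReal_tsum_of_nonneg
    (fun m => mul_nonneg (hcoeff m) (jacobiMoment_nonneg hc hs n m)) hsum.summable]
  simp only [ENNReal.ofReal_mul (hcoeff _)]

lemma jacobiWeight_mul_jacobiCoeff_mul_jacobiCoeff (n : ℕ) :
    jacobiWeight c s n * (jacobiCoeff a b c s n * jacobiCoeff a' b' c s n)
      = pFq [a, b] [c + s] 1 * pFq [a', b'] [c + s] 1
        * pFqCoeff [a, a', s, c + s - 1, b, b', (c + s + 1) / 2]
          [(c + s - 1) / 2, c + s - b, c + s - b', c, c + s - a, c + s - a'] n := by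
  simp only [jacobiWeight, jacobiCoeff, pFqCoeff, List.map_cons, List.map_nil, List.prod_cons,
    List.prod_nil]
  ring

lemma hasSum_jacobiWeight_mul_jacobiCoeff_mul_jacobiCoeff (ha : 0 < a) (hb : 0 < b)
    (ha' : 0 < a') (hb' : 0 < b') (hc : 0 < c) (hs : 0 < s) (hcs : 1 < c + s)
    (hab : a + b < c + s) (hab' : a' + b' < c + s) (hsum : a + b + a' + b' < 2 * c + s) :
    HasSum (fun n => jacobiWeight c s n * (jacobiCoeff a b c s n * jacobiCoeff a' b' c s n))
      (pFq [a, b] [c + s] 1 * pFq [a', b'] [c + s] 1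
        * pFq [a, a', s, c + s - 1, b, b', (c + s + 1) / 2]
          [(c + s - 1) / 2, c + s - b, c + s - b', c, c + s - a, c + s - a'] 1) := by
  simp only [jacobiWeight_mul_jacobiCoeff_mul_jacobiCoeff]
  refine (hasSum_pFqCoeff ?_ ?_ rfl ?_).mul_left _
  · simp only [List.mem_cons, List.not_mem_nil, or_false, forall_eq_or_imp, forall_eq]
    refine ⟨?_, ?_, ?_, ?_, ?_, ?_, ?_⟩ <;> linarith
  · simp only [List.mem_cons, List.not_mem_nil, or_false, forall_eq_or_imp, forall_eq]
    refine ⟨?_, ?_, ?_, ?_, ?_, ?_⟩ <;> linarith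
  · simp only [List.sum_cons, List.sum_nil]
    linarith

lemma lintegral_tsum_pFqCoeff_mul_tsum_pFqCoeff_betaMeasure (ha : 0 < a) (hb : 0 < b)
    (ha' : 0 < a') (hb' : 0 < b') (hc : 0 < c) (hs : 0 < s) (hcs : 1 < c + s)
    (hab : a + b < c + s) (hab' : a' + b' < c + s) (hsum : a + b + a' + b' < 2 * c + s) :
    ∫⁻ x, (∑' m, ENNReal.ofReal (pFqCoeff [a, b] [c] m) * ENNReal.ofReal x ^ m)
        * ∑' k, ENNReal.ofReal (pFqCoeff [a', b'] [c] k) * ENNReal.ofReal x ^ k ∂betaMeasure c s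
      = ENNReal.ofReal (pFq [a, b] [c + s] 1 * pFq [a', b'] [c + s] 1
          * pFq [a, a', s, c + s - 1, b, b', (c + s + 1) / 2]
            [(c + s - 1) / 2, c + s - b, c + s - b', c, c + s - a, c + s - a'] 1) := by
  have hweight (n : ℕ) := (jacobiWeight_pos hc hs hcs n).le
  have hcoeff := jacobiCoeff_nonneg ha hb hc hs hab
  have hcoeff' := jacobiCoeff_nonneg ha' hb' hc hs hab'
  have hseries := hasSum_jacobiWeight_mul_jacobiCoeff_mul_jacobiCoeff ha hb ha' hb' hc hs hcs hab
    hab' hsum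
  rw [lintegral_tsum_mul_tsum_betaMeasure hc hs hcs, ← hseries.tsum_eq,
    ENNReal.ofReal_tsum_of_nonneg
      (fun n => mul_nonneg (hweight n) (mul_nonneg (hcoeff n) (hcoeff' n))) hseries.summable]
  simp only [tsum_ofReal_pFqCoeff_two_one_mul_jacobiMoment ha hb hc hs hab,
    tsum_ofReal_pFqCoeff_two_one_mul_jacobiMoment ha' hb' hc hs hab',
    ENNReal.ofReal_mul (hweight _), ENNReal.ofReal_mul (hcoeff _)]

theorem laporta_integral_7F6_general (ha : 0 < a) (hb : 0 < b)
    (ha' : 0 < a') (hb' : 0 < b') (hc : 0 < c) (hs : 0 < s) (hcs : 1 < c + s)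
    (hab : a + b < c + s) (hab' : a' + b' < c + s) (hsum : a + b + a' + b' < 2 * c + s) :
    Integrable (fun x => pFq [a, b] [c] x * pFq [a', b'] [c] x) (betaMeasure c s) ∧
      ∫ x, pFq [a, b] [c] x * pFq [a', b'] [c] x ∂betaMeasure c s
        = pFq [a, b] [c + s] 1 * pFq [a', b'] [c + s] 1
          * pFq [a, a', s, c + s - 1, b, b', (c + s + 1) / 2]
            [(c + s - 1) / 2, c + s - b, c + s - b', c, c + s - a, c + s - a'] 1 := by
  set F : ℝ → ℝ≥0∞ := fun x =>
    (∑' m, ENNReal.ofReal (pFqCoeff [a, b] [c] m) * ENNReal.ofReal x ^ m)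
      * ∑' k, ENNReal.ofReal (pFqCoeff [a', b'] [c] k) * ENNReal.ofReal x ^ k
  have hF : AEMeasurable F (betaMeasure c s) :=
    ((Measurable.tsum fun m => by fun_prop).mul (Measurable.tsum fun k => by fun_prop)).aemeasurable
  have hlintegral : ∫⁻ x, F x ∂betaMeasure c s = _ :=
    lintegral_tsum_pFqCoeff_mul_tsum_pFqCoeff_betaMeasure ha hb ha' hb' hc hs hcs hab hab' hsum
  have hfinite : ∫⁻ x, F x ∂betaMeasure c s ≠ ∞ := hlintegral ▸ ENNReal.ofReal_ne_top
  have hae : (fun x => pFq [a, b] [c] x * pFq [a', b'] [c] x)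
      =ᵐ[betaMeasure c s] fun x => (F x).toReal := by
    filter_upwards [ae_betaMeasure_mem_Ioo c s] with x hx
    rw [ENNReal.toReal_mul, pFq_eq_toReal_tsum (by simp [ha, hb]) (by simpa) hx.1.le,
      pFq_eq_toReal_tsum (by simp [ha', hb']) (by simpa) hx.1.le]
  refine ⟨(integrable_congr hae).2 (integrable_toReal_of_lintegral_ne_top hF hfinite), ?_⟩
  rw [integral_congr_ae hae, integral_toReal hF (ae_lt_top' hF hfinite), hlintegral,
    ENNReal.toReal_ofReal]
  exact (hasSum_jacobiWeight_mul_jacobiCoeff_mul_jacobiCoeff ha hb ha' hb' hc hs hcs hab hab'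
    hsum).nonneg fun n => mul_nonneg (jacobiWeight_pos hc hs hcs n).le
      (mul_nonneg (jacobiCoeff_nonneg ha hb hc hs hab n) (jacobiCoeff_nonneg ha' hb' hc hs hab' n))

end HypergeometricParseval

section SpecialValues

lemma Gamma_five_sixths_mul_Gamma_seven_sixths : Gamma (5 / 6) * Gamma (7 / 6) = π / 3 := by
  have hreflection := Gamma_mul_Gamma_one_sub (1 / 6)
  rw [show π * (1 / 6) = π / 6 by ring, sin_pi_div_six,
    show (1 - 1 / 6 : ℝ) = 5 / 6 by norm_num] at hreflection
  rw [show (7 / 6 : ℝ) = 1 / 6 + 1 by norm_num, Gamma_add_one (by norm_num)]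
  linear_combination (1 / 6) * hreflection

lemma Gamma_three_halves : Gamma (3 / 2) = √π / 2 := by
  rw [show (3 / 2 : ℝ) = 1 / 2 + 1 by norm_num, Gamma_add_one (by norm_num), Gamma_one_half_eq]
  ring

lemma pFq_one_third_two_thirds_three_halves_one : pFq [1 / 3, 2 / 3] [3 / 2] 1 = 3 / 2 := by
  rw [pFq_two_one_one (by norm_num) (by norm_num) (by norm_num)]
  norm_num only
  rw [Gamma_three_halves, Gamma_one_half_eq, mul_comm (Gamma (7 / 6)),
    Gamma_five_sixths_mul_Gamma_seven_sixths, div_mul_eq_mul_div, mul_self_sqrt pi_pos.le]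
  field_simp

lemma beta_one_one_half : beta 1 (1 / 2) = 2 := by
  rw [beta, Gamma_one, show (1 + 1 / 2 : ℝ) = 3 / 2 by norm_num, Gamma_three_halves,
    Gamma_one_half_eq]
  field_simp

end SpecialValues

lemma integral_div_sqrt_one_sub (f : ℝ → ℝ) :
    ∫ x in (0 : ℝ)..1, f x / √(1 - x) = 2 * ∫ x, f x ∂betaMeasure 1 (1 / 2) := by
  rw [integral_betaMeasure one_pos one_half_pos, beta_one_one_half, mul_div_cancel₀ _ two_ne_zero]
  refine intervalIntegral.integral_congr fun x hx => ?_
  have hx1 : 0 ≤ 1 - x := sub_nonneg.2 (uIcc_of_le (zero_le_one' ℝ) ▸ hx).2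
  have hexponent : (1 / 2 : ℝ) - 1 = -(1 / 2) := by norm_num
  rw [hexponent, rpow_neg hx1, ← sqrt_eq_rpow, sub_self, rpow_zero]
  ring

theorem laporta_integral_7F6 :
    (∫ x in (0:ℝ)..1, (pFq [1/3, 2/3] [1] x)^2 / Real.sqrt (1 - x))
    = (9/2) * pFq [1/3, 1/3, 1/2, 1/2, 2/3, 2/3, 5/4]
        [1/4, 5/6, 5/6, 1, 7/6, 7/6] 1 := by
  have hgeneral := (laporta_integral_7F6_general (a := 1 / 3) (b := 2 / 3) (a' := 1 / 3)
    (b' := 2 / 3) (c := 1) (s := 1 / 2) (by norm_num) (by norm_num) (by norm_num) (by norm_num)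
    (by norm_num) (by norm_num) (by norm_num) (by norm_num) (by norm_num) (by norm_num)).2
  simp only [integral_div_sqrt_one_sub, sq, hgeneral]
  norm_num only [pFq_one_third_two_thirds_three_halves_one, ← mul_assoc]
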